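/- arXiv:2402.18486 — 2 statements merged into one kernel-verified Lean document; each statement's English description precedes it below -/
import Mathlib

section
/- Let B be a supersoluble brace and let p be a prime. Then U_p^+(B) = U_p^·(B), and this set is an ideal of B. -/
/-!
Descend along the chain of ideals. Suppose that `U_p(B / I) = K / I` for an ideal `K`, where `U_p`
is both `U_p^+` and `U_p^·` and the order of `K / I` is finite with all prime divisors greater
than `p`, and let `I / J` be a factor of the chain. If `I / J` has prime order greater than `p`,
then `U_p(B / J) = K / J`.

Otherwise `I / J` is a trivial brace with cyclic additive group, infinite or of prime order at most
`p`, so `m = |K / I|` is coprime to `|Aut (I / J)|`. As `I` acts trivially on `I / J`, both by `λ`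
and by additive conjugation, so does `K`. Hence `I / J` is central in `(K / J, +)` and `x ↦ m x`,
the transfer into this central subgroup, is additive. As `λ` is trivial on its values, it also turns
products into sums. Since `I / J` has no element whose order is a prime greater than `p`, both
`U_p^+(B / J)` and `U_p^·(B / J)` are the kernel of this map.
-/

/-- A (skew left) brace: a set with an additive group structure (not necessarily abelian)
and a multiplicative group structure sharing the same identity, satisfying the skew
distributive law `a * (b + c) = a * b + -a + a * c`. -/
class SkewBrace (B : Type*) extends AddGroup B, Group B where
  one_eq_zero : (1 : B) = (0 : B)
  skew_distrib : ∀ a b c : B, a * (b + c) = a * b + -a + a * c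

/-- A group is supersoluble if it has a finite chain of normal subgroups with all
factors cyclic. -/
def Group.IsSupersoluble (G : Type*) [Group G] : Prop :=
  ∃ (n : ℕ) (H : ℕ → Subgroup G),
    H 0 = ⊥ ∧ H n = ⊤ ∧ (∀ i, (H i).Normal) ∧ (∀ i, i < n → H i ≤ H (i + 1)) ∧
    ∀ i, i < n → ∃ x ∈ H (i + 1), ∀ y ∈ H (i + 1), ∃ k : ℤ, (x ^ k)⁻¹ * y ∈ H i

namespace SkewBrace

variable {B : Type*} [SkewBrace B]

/-- `lam a b = -a + a * b`, i.e. `λ_a(b)`. -/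
def lam (a b : B) : B := -a + a * b

/-- the star operation `a ∗ b = λ_a(b) - b`. -/
def starOp (a b : B) : B := lam a b + -b

/-- the additive commutator `[a,b]_+`. -/
def addCommutator (a b : B) : B := -a + -b + a + b

/-- A subbrace of `B`: a subset that is a subgroup of both `(B,+)` and `(B,·)`. -/
structure Subbrace (B : Type*) [SkewBrace B] where
  carrier : Set B
  zero_mem : (0 : B) ∈ carrier
  add_mem : ∀ {a b : B}, a ∈ carrier → b ∈ carrier → a + b ∈ carrier
  neg_mem : ∀ {a : B}, a ∈ carrier → -a ∈ carrier
  mul_mem : ∀ {a b : B}, a ∈ carrier → b ∈ carrier → a * b ∈ carrier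
  inv_mem : ∀ {a : B}, a ∈ carrier → a⁻¹ ∈ carrier

/-- An ideal of `B`: a subbrace that is normal in `(B,+)` and in `(B,·)` and is
invariant under all the maps `λ_b`. -/
structure BraceIdeal (B : Type*) [SkewBrace B] extends Subbrace B where
  addConj_mem : ∀ (b : B) {a : B}, a ∈ carrier → b + a + -b ∈ carrier
  mulConj_mem : ∀ (b : B) {a : B}, a ∈ carrier → b * a * b⁻¹ ∈ carrier
  lam_mem : ∀ (b : B) {a : B}, a ∈ carrier → lam b a ∈ carrier

/-- The additive subgroup underlying a subbrace. -/
def Subbrace.addSubgroup (S : Subbrace B) : AddSubgroup B where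
  carrier := S.carrier
  zero_mem' := S.zero_mem
  add_mem' := S.add_mem
  neg_mem' := S.neg_mem

/-- The multiplicative subgroup underlying a subbrace. -/
def Subbrace.subgroup (S : Subbrace B) : Subgroup B where
  carrier := S.carrier
  one_mem' := by rw [one_eq_zero]; exact S.zero_mem
  mul_mem' := S.mul_mem
  inv_mem' := S.inv_mem

/-- Given ideals `J ≤ I` of `B`, `MemSocQuotRel I J x` says that the coset of `x`
lies in `Soc(I/J) = Ker(λ) ∩ Z(I/J, +)` (for `I = B` take `I = Set.univ`). -/
def MemSocQuotRel (I J : Set B) (x : B) : Prop :=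
  x ∈ I ∧ (∀ y ∈ I, -y + lam x y ∈ J) ∧ ∀ y ∈ I, -(y + x) + (x + y) ∈ J

/-- Given ideals `J ≤ I` of `B`, `MemZetaQuotRel I J x` says that the coset of `x`
lies in `ζ(I/J) = Soc(I/J) ∩ Z(I/J, ·)`. -/
def MemZetaQuotRel (I J : Set B) (x : B) : Prop :=
  MemSocQuotRel I J x ∧ ∀ y ∈ I, (y * x)⁻¹ * (x * y) ∈ J

/-- The coset of `x` lies in `Soc(B/J)`. -/
def MemSocQuot (J : Set B) (x : B) : Prop := MemSocQuotRel Set.univ J x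

/-- The coset of `x` lies in `ζ(B/J)`. -/
def MemZetaQuot (J : Set B) (x : B) : Prop := MemZetaQuotRel Set.univ J x

/-- For ideals `I ≤ J`, the additive group of the quotient `J/I` is infinite cyclic. -/
def QuotAddInfCyclic (I J : Set B) : Prop :=
  ∃ x ∈ J, (∀ y ∈ J, ∃ n : ℤ, -(n • x) + y ∈ I) ∧ ∀ n : ℤ, n • x ∈ I → n = 0

/-- For ideals `I ≤ J`, the quotient `J/I` has prime order `p`. -/
def QuotPrimeOrder (I J : Set B) (p : ℕ) : Prop :=
  p.Prime ∧ ∃ x ∈ J, x ∉ I ∧ p • x ∈ I ∧ ∀ y ∈ J, ∃ n : ℤ, -(n • x) + y ∈ I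

/-- A brace is supersoluble if it has a finite chain of ideals each factor of which
either is additively infinite cyclic and contained in the socle of the corresponding
quotient, or has prime order. -/
def IsSupersoluble (B : Type*) [SkewBrace B] : Prop :=
  ∃ (n : ℕ) (I : ℕ → BraceIdeal B),
    (I 0).carrier = {0} ∧ (I n).carrier = Set.univ ∧
    (∀ i, i < n → (I i).carrier ⊆ (I (i + 1)).carrier) ∧
    ∀ i, i < n →
      (QuotAddInfCyclic (I i).carrier (I (i + 1)).carrier ∧
        ∀ x ∈ (I (i + 1)).carrier, MemSocQuot (I i).carrier x) ∨
      ∃ p : ℕ, QuotPrimeOrder (I i).carrier (I (i + 1)).carrier p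

/-- The upper socle series of the brace (carrier of the ideal) `I`. -/
def socChainRel (I : Set B) : ℕ → Set B
  | 0 => {0}
  | n + 1 => {x | MemSocQuotRel I (socChainRel I n) x}

/-- The upper central series of the brace (carrier of the ideal) `I`. -/
def zetaChainRel (I : Set B) : ℕ → Set B
  | 0 => {0}
  | n + 1 => {x | MemZetaQuotRel I (zetaChainRel I n) x}

/-- The upper socle series `Soc_n(B)` of `B`. -/
def socChain (B : Type*) [SkewBrace B] : ℕ → Set B := socChainRel Set.univ

/-- The upper central series `ζ_n(B)` of `B`. -/
def zetaChain (B : Type*) [SkewBrace B] : ℕ → Set B := zetaChainRel Set.univ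

/-- A brace is centrally nilpotent if its upper central series reaches `B`. -/
def IsCentrallyNilpotent (B : Type*) [SkewBrace B] : Prop :=
  ∃ m : ℕ, zetaChain B m = Set.univ

end SkewBrace

namespace SkewBrace

/-- `U_p^+(B)`: the elements of `B` whose additive order is finite and divisible
only by primes `q > p`. -/
def Uadd (p : ℕ) (B : Type*) [SkewBrace B] : Set B :=
  {x | addOrderOf x ≠ 0 ∧ ∀ q : ℕ, q.Prime → q ∣ addOrderOf x → p < q}

/-- `U_p^·(B)`: the elements of `B` whose multiplicative order is finite and divisible
only by primes `q > p`. -/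
def Umul (p : ℕ) (B : Type*) [SkewBrace B] : Set B :=
  {x | orderOf x ≠ 0 ∧ ∀ q : ℕ, q.Prime → q ∣ orderOf x → p < q}

section GroupTheory

theorem eq_one_of_pow_eq_one_of_coprime_card_units {M : Type*} [Monoid M] {x : M} {n : ℕ}
    (hn : n ≠ 0) (hcop : n.Coprime (Nat.card Mˣ)) (hx : x ^ n = 1) : x = 1 := by
  have hpow : Units.ofPowEqOne x n hx hn ^ n = 1 := Units.pow_ofPowEqOne hx hn
  exact congrArg Units.val
    (hcop.symm.pow_left_bijective.injective (hpow.trans (one_pow n).symm))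

theorem addMonoidEnd_eq_one_of_pow_eq_one {C : Type*} [AddGroup C] [IsAddCyclic C] {n : ℕ}
    (hn : n ≠ 0) (hcop : n.Coprime (Nat.card (ZMod (Nat.card C))ˣ)) {f : AddMonoid.End C}
    (hf : f ^ n = 1) : f = 1 := by
  let : MulDistribMulAction (AddMonoid.End C) (Multiplicative C) :=
    { smul := fun f c ↦ .ofAdd (f c.toAdd)
      one_smul := fun _ ↦ rfl
      mul_smul := fun _ _ _ ↦ rfl
      smul_one := fun f ↦ f.map_zero
      smul_mul := fun f ↦ f.map_add }
  let χ : AddMonoid.End C →* ZMod (Nat.card C) :=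
    MulDistribMulAction.toMonoidHomZModOfIsCyclic (Multiplicative C) (AddMonoid.End C) rfl
  have hχ : χ f = 1 :=
    eq_one_of_pow_eq_one_of_coprime_card_units hn hcop (by rw [← map_pow, hf, map_one])
  ext c
  have hfc := MulDistribMulAction.toMonoidHomZModOfIsCyclic_apply rfl f (.ofAdd c) 1
    (hχ.trans Int.cast_one.symm)
  rwa [zpow_one] at hfc

/-- The action on the subquotient `I / J` induced by an action `ρ` by endomorphisms that preserves
both `I` and `J`. -/
def subquotientEnd {A M : Type*} [AddGroup A] [Monoid M] (ρ : M →* AddMonoid.End A)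
    {I J : AddSubgroup A} [J.Normal] (hI : ∀ a, I ≤ I.comap (ρ a)) (hJ : ∀ a, J ≤ J.comap (ρ a)) :
    M →* AddMonoid.End (I ⧸ J.addSubgroupOf I) where
  toFun a := QuotientAddGroup.map _ _
    (((ρ a).comp I.subtype).codRestrict I fun x ↦ hI a x.2) fun _ hx ↦ hJ a hx
  map_one' := DFunLike.ext _ _ fun x ↦ by
    induction x using QuotientAddGroup.induction_on with
    | H x => exact congrArg _ (Subtype.ext (DFunLike.congr_fun (map_one ρ) x.1))
  map_mul' a b := DFunLike.ext _ _ fun x ↦ by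
    induction x using QuotientAddGroup.induction_on with
    | H x => exact congrArg _ (Subtype.ext (DFunLike.congr_fun (map_mul ρ a b) x.1))

theorem subquotientEnd_eq_one_iff {A M : Type*} [AddGroup A] [Monoid M] (ρ : M →* AddMonoid.End A)
    {I J : AddSubgroup A} [J.Normal] (hI : ∀ a, I ≤ I.comap (ρ a)) (hJ : ∀ a, J ≤ J.comap (ρ a))
    (a : M) : subquotientEnd ρ hI hJ a = 1 ↔ ∀ x ∈ I, (ρ a x : A ⧸ J) = x := by
  simp only [DFunLike.ext_iff, QuotientAddGroup.mk_surjective.forall, Subtype.forall]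
  exact forall₂_congr fun x hx ↦ QuotientAddGroup.eq.trans (QuotientAddGroup.eq (s := J)).symm

theorem mk_apply_eq_of_mk_pow_apply_eq {A M : Type*} [AddGroup A] [Monoid M]
    (ρ : M →* AddMonoid.End A) {I J : AddSubgroup A} [J.Normal] (hI : ∀ a, I ≤ I.comap (ρ a))
    (hJ : ∀ a, J ≤ J.comap (ρ a)) [IsAddCyclic (I ⧸ J.addSubgroupOf I)] {n : ℕ} (hn : n ≠ 0)
    (hcop : n.Coprime (Nat.card (ZMod (J.relIndex I))ˣ)) {a : M}
    (ha : ∀ x ∈ I, (ρ (a ^ n) x : A ⧸ J) = x) : ∀ x ∈ I, (ρ a x : A ⧸ J) = x := by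
  rw [← subquotientEnd_eq_one_iff ρ hI hJ] at ha ⊢
  exact addMonoidEnd_eq_one_of_pow_eq_one hn hcop (by rw [← map_pow, ha])

theorem addCommute_mk {A : Type*} [AddGroup A] {I J : AddSubgroup A} [J.Normal]
    [IsAddCommutative (I ⧸ J.addSubgroupOf I)] {x y : A} (hx : x ∈ I) (hy : y ∈ I) :
    AddCommute (x : A ⧸ J) y := by
  let x' : I := ⟨x, hx⟩
  let y' : I := ⟨y, hy⟩
  have hcomm : ((x' + y' : I) : I ⧸ J.addSubgroupOf I) = ((y' + x' : I) : I ⧸ _) :=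
    IsAddCommutative.is_comm.comm (x' : I ⧸ J.addSubgroupOf I) y'
  have hmem : -(x' + y') + (y' + x') ∈ J.addSubgroupOf I := QuotientAddGroup.eq.1 hcomm
  exact (QuotientAddGroup.eq (s := J)).2 hmem

/-- The action of an additive group on itself by conjugation; `Multiplicative` only turns its
addition into the composition of endomorphisms. -/
def conjEnd {A : Type*} [AddGroup A] : Multiplicative A →* AddMonoid.End A where
  toFun a := AddMonoidHom.mk' (fun x ↦ a.toAdd + x + -a.toAdd) fun x y ↦ by simp [add_assoc]
  map_one' := AddMonoidHom.ext fun x ↦ show 0 + x + -0 = x by simp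
  map_mul' a b := AddMonoidHom.ext fun x ↦
    show a.toAdd + b.toAdd + x + -(a.toAdd + b.toAdd) =
      a.toAdd + (b.toAdd + x + -b.toAdd) + -a.toAdd by simp [add_assoc]

theorem mul_pow_index_of_le_center {G : Type*} [Group G] {H : Subgroup G}
    (hH : H ≤ Subgroup.center G) (hi : H.index ≠ 0) (x y : G) :
    (x * y) ^ H.index = x ^ H.index * y ^ H.index := by
  have : H.FiniteIndex := ⟨hi⟩
  have : IsMulCommutative H := ⟨⟨fun a b ↦ Subtype.ext (Subgroup.mem_center_iff.1 (hH b.2) a)⟩⟩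
  have hconj (g : G) (k : ℕ) (c : G) (h : c⁻¹ * g ^ k * c ∈ H) : c⁻¹ * g ^ k * c = g ^ k := by
    have hcomm : g ^ k * c = c⁻¹ * g ^ k * c * c := by
      rw [← Subgroup.mem_center_iff.1 (hH h) c]; group
    exact (mul_right_cancel hcomm).symm
  open scoped IsMulCommutative in
  have htransfer (g : G) := MonoidHom.transfer_eq_pow (MonoidHom.id H) g (hconj g)
  have hmul := map_mul (MonoidHom.transfer (MonoidHom.id H)) x y
  rw [htransfer, htransfer, htransfer] at hmul
  exact congrArg Subtype.val hmul

theorem nsmul_relIndex_add {A : Type*} [AddGroup A] {I K : AddSubgroup A}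
    (hcomm : ∀ a ∈ I, ∀ b ∈ K, AddCommute b a) (hi : I.relIndex K ≠ 0) {x y : A}
    (hx : x ∈ K) (hy : y ∈ K) :
    I.relIndex K • (x + y) = I.relIndex K • x + I.relIndex K • y := by
  have hcenter : (I.addSubgroupOf K).toSubgroup ≤ Subgroup.center (Multiplicative K) :=
    fun a ha ↦ Subgroup.mem_center_iff.2 fun b ↦
      congrArg Multiplicative.ofAdd (Subtype.ext (hcomm _ ha b.toAdd.1 b.toAdd.2))
  exact congrArg Subtype.val
    (mul_pow_index_of_le_center hcenter hi (.ofAdd ⟨x, hx⟩) (.ofAdd ⟨y, hy⟩))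

theorem mk_nsmul_relIndex_add {A : Type*} [AddGroup A] {I J K : AddSubgroup A} [J.Normal]
    (hJI : J ≤ I) (hJK : J ≤ K)
    (hcomm : ∀ a ∈ I, ∀ b ∈ K, AddCommute (b : A ⧸ J) a) (hi : I.relIndex K ≠ 0) {x y : A}
    (hx : x ∈ K) (hy : y ∈ K) :
    ((I.relIndex K • (x + y) : A) : A ⧸ J) = ↑(I.relIndex K • x) + ↑(I.relIndex K • y) := by
  let π := QuotientAddGroup.mk' J
  have hindex : (I.map π).relIndex (K.map π) = I.relIndex K := by
    rw [AddSubgroup.relIndex_map_map, QuotientAddGroup.ker_mk', sup_of_le_left hJI,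
      sup_of_le_left hJK]
  have hadd := nsmul_relIndex_add (I := I.map π) (K := K.map π)
    (by rintro _ ⟨a, ha, rfl⟩ _ ⟨b, hb, rfl⟩; exact hcomm a ha b hb)
    (hindex ▸ hi) (AddSubgroup.mem_map_of_mem π hx) (AddSubgroup.mem_map_of_mem π hy)
  rw [hindex] at hadd
  exact hadd

end GroupTheory

section Rough

/-- `n` is a positive integer all of whose prime divisors exceed `p`; an element `x` lies in
`U_p^+(B)` if and only if `IsRough p (addOrderOf x)`. The inequality is strict, so this is what is
usually called `(p + 1)`-rough. -/
def IsRough (p n : ℕ) : Prop := n ≠ 0 ∧ ∀ q : ℕ, q.Prime → q ∣ n → p < q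

variable {p m n q : ℕ}

theorem isRough_one (p : ℕ) : IsRough p 1 :=
  ⟨one_ne_zero, fun _ hq h ↦ absurd (Nat.dvd_one.1 h) hq.ne_one⟩

theorem IsRough.mul (hm : IsRough p m) (hn : IsRough p n) : IsRough p (m * n) :=
  ⟨mul_ne_zero hm.1 hn.1, fun q hq h ↦ (hq.dvd_mul.1 h).elim (hm.2 q hq) (hn.2 q hq)⟩

theorem IsRough.of_dvd (hn : IsRough p n) (h : m ∣ n) : IsRough p m :=
  ⟨ne_zero_of_dvd_ne_zero hn.1 h, fun q hq hqm ↦ hn.2 q hq (hqm.trans h)⟩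

theorem isRough_of_prime (hq : q.Prime) (h : p < q) : IsRough p q :=
  ⟨hq.ne_zero, fun r hr hrq ↦ by rwa [(Nat.prime_dvd_prime_iff_eq hr hq).1 hrq]⟩

theorem IsRough.coprime (hn : IsRough p n) (hm : m ≠ 0) (hmp : m ≤ p) : n.Coprime m :=
  Nat.coprime_of_dvd fun q hq hqn hqm ↦
    (hn.2 q hq hqn).not_ge ((Nat.le_of_dvd (Nat.pos_of_ne_zero hm) hqm).trans hmp)

theorem card_units_zmod_of_prime (hq : q.Prime) : Nat.card (ZMod q)ˣ = q - 1 := by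
  have := Fact.mk hq
  rw [Nat.card_eq_fintype_card, ZMod.card_units]

theorem IsRough.coprime_card_units_zmod (hp : 2 ≤ p) (hn : IsRough p n)
    (hq : q = 0 ∨ q.Prime ∧ q ≤ p) : n.Coprime (Nat.card (ZMod q)ˣ) := by
  rcases hq with rfl | ⟨hq, hqp⟩
  · have hcard : Nat.card (ZMod 0)ˣ = 2 := Nat.card_eq_fintype_card (α := ℤˣ)
    exact hcard ▸ hn.coprime two_ne_zero hp
  · rw [card_units_zmod_of_prime hq]
    exact hn.coprime (Nat.sub_ne_zero_of_lt hq.one_lt) ((Nat.sub_le q 1).trans hqp)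

theorem IsRough.eq_zero_of_nsmul_eq_zero {C : Type*} [AddGroup C] [IsAddCyclic C]
    (hn : IsRough p n) (hC : Nat.card C = 0 ∨ (Nat.card C).Prime ∧ Nat.card C ≤ p) {x : C}
    (hx : n • x = 0) : x = 0 := by
  rcases hC with hC | ⟨hC, hCp⟩
  · have : Infinite C := (Nat.card_eq_zero.1 hC).resolve_left (not_isEmpty_of_nonempty C)
    let e : ℤ ≃+ C := intCyclicAddEquiv
    have hex : n • e.symm x = 0 := by rw [← map_nsmul, hx, map_zero]
    simpa [hn.1] using hex
  · exact (hn.coprime hC.ne_zero hCp).symm.nsmul_right_bijective.injective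
      (hx.trans (nsmul_zero n).symm)

end Rough

section Lambda

variable {B : Type*} [SkewBrace B]

theorem lam_add (a b c : B) : lam a (b + c) = lam a b + lam a c := by
  simp only [lam, skew_distrib, add_assoc]

theorem mul_eq_add_lam (a b : B) : a * b = a + lam a b :=
  (add_neg_cancel_left a (a * b)).symm

theorem lam_one (a : B) : lam 1 a = a := by
  rw [lam, one_mul, one_eq_zero, neg_zero, zero_add]

theorem lam_mul (a b c : B) : lam (a * b) c = lam a (lam b c) := by
  have h := lam_add a b (lam b c)
  rw [← mul_eq_add_lam b c, eq_comm, ← eq_neg_add_iff_add_eq] at h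
  rw [h]
  simp only [lam, mul_assoc, neg_add_rev, neg_neg, add_assoc, add_neg_cancel_left]

theorem inv_eq_neg_lam (a : B) : a⁻¹ = -lam a⁻¹ a := by
  rw [lam, inv_mul_cancel, one_eq_zero, add_zero, neg_neg]

/-- The action `λ` of the multiplicative group of a brace on its additive group. -/
def lamEnd : B →* AddMonoid.End B where
  toFun a := AddMonoidHom.mk' (lam a) (lam_add a)
  map_one' := AddMonoidHom.ext lam_one
  map_mul' a b := AddMonoidHom.ext (lam_mul a b)

end Lambda

section Ideal

variable {B : Type*} [SkewBrace B]

instance : SetLike (BraceIdeal B) B where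
  coe I := I.carrier
  coe_injective := by
    rintro ⟨⟨⟩⟩ ⟨⟨⟩⟩ h
    congr

instance : PartialOrder (BraceIdeal B) := .ofSetLike (BraceIdeal B) B

instance : AddSubgroupClass (BraceIdeal B) B where
  add_mem {I} := I.add_mem
  zero_mem I := I.zero_mem
  neg_mem {I} := I.neg_mem

instance : SubgroupClass (BraceIdeal B) B where
  mul_mem {I} := I.mul_mem
  one_mem I := I.subgroup.one_mem
  inv_mem {I} := I.inv_mem

variable {I J : BraceIdeal B}

instance : J.addSubgroup.Normal := ⟨fun _ h b ↦ J.addConj_mem b h⟩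

instance : J.subgroup.Normal := ⟨fun _ h b ↦ J.mulConj_mem b h⟩

theorem lam_mem_iff (J : BraceIdeal B) (a : B) {x : B} : lam a x ∈ J ↔ x ∈ J := by
  refine ⟨fun h ↦ ?_, J.lam_mem a⟩
  rw [← lam_one x, ← inv_mul_cancel a, lam_mul]
  exact J.lam_mem a⁻¹ h

theorem inv_mul_mem_iff_neg_add_mem (J : BraceIdeal B) (a b : B) : a⁻¹ * b ∈ J ↔ -a + b ∈ J := by
  rw [← lam_mem_iff J a, lam, mul_inv_cancel_left]

/-- The index of `J ∩ I` in `I`, i.e. the order of the factor `I / J` if `J ≤ I`; by convention it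
is `0` if that factor is infinite. Additive and multiplicative cosets give the same index, see
`subgroup_relIndex`. -/
noncomputable def BraceIdeal.relIndex (J I : BraceIdeal B) : ℕ :=
  J.addSubgroup.relIndex I.addSubgroup

theorem subgroup_relIndex (J I : BraceIdeal B) :
    J.subgroup.relIndex I.subgroup = J.relIndex I :=
  Nat.card_congr <| Quotient.congr (Equiv.refl I.carrier) fun a b ↦
    (QuotientGroup.leftRel_apply (s := J.subgroup.subgroupOf I.subgroup)).trans <|
      (inv_mul_mem_iff_neg_add_mem J a.1 b.1).trans
        (QuotientAddGroup.leftRel_apply (s := J.addSubgroup.addSubgroupOf I.addSubgroup)).symm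

theorem nsmul_relIndex_mem (J : BraceIdeal B) {x : B} (hx : x ∈ I) : J.relIndex I • x ∈ J :=
  J.addSubgroup.nsmul_relIndex_mem hx

theorem pow_relIndex_mem (J : BraceIdeal B) {x : B} (hx : x ∈ I) : x ^ J.relIndex I ∈ J := by
  rw [← subgroup_relIndex]
  exact J.subgroup.pow_relIndex_mem hx

theorem relIndex_mul_relIndex {K : BraceIdeal B} (hJI : J ≤ I) (hIK : I ≤ K) :
    J.relIndex I * I.relIndex K = J.relIndex K :=
  AddSubgroup.relIndex_mul_relIndex _ _ _ hJI hIK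

/-- The additive group of the factor `I / J`, for ideals `J ≤ I`. -/
abbrev BraceIdeal.AddFactor (J I : BraceIdeal B) : Type _ :=
  I.addSubgroup ⧸ J.addSubgroup.addSubgroupOf I.addSubgroup

theorem mk_eq_zero_iff {x : B} : (x : B ⧸ J.addSubgroup) = 0 ↔ x ∈ J :=
  QuotientAddGroup.eq_zero_iff x

theorem mk_lam_of_mem {a : B} (ha : a ∈ J) (x : B) :
    ((lam a x : B) : B ⧸ J.addSubgroup) = x := by
  have hconj : x⁻¹ * (a * x) ∈ J := by
    rw [← mul_assoc]
    exact (inferInstance : J.subgroup.Normal).conj_mem' a ha x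
  calc
    ((lam a x : B) : B ⧸ J.addSubgroup) = -(a : B ⧸ J.addSubgroup) + ((a * x : B) : _) := rfl
    _ = ((a * x : B) : _) := by rw [mk_eq_zero_iff.2 ha, neg_zero, zero_add]
    _ = x := (QuotientAddGroup.eq.2 ((inv_mul_mem_iff_neg_add_mem J x (a * x)).1 hconj)).symm

end Ideal

section RelativeU

variable {B : Type*} [SkewBrace B] {p : ℕ} {J : BraceIdeal B} {x y : B}

/-- The preimage in `B` of `U_p^+(B / J)`. -/
def UaddMod (p : ℕ) (J : BraceIdeal B) : Set B := {x | ∃ n, IsRough p n ∧ n • x ∈ J}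

/-- The preimage in `B` of `U_p^·(B / J)`. -/
def UmulMod (p : ℕ) (J : BraceIdeal B) : Set B := {x | ∃ n, IsRough p n ∧ x ^ n ∈ J}

theorem subset_UaddMod (p : ℕ) (J : BraceIdeal B) : (J : Set B) ⊆ UaddMod p J :=
  fun x hx ↦ ⟨1, isRough_one p, (one_nsmul x).symm ▸ hx⟩

theorem neg_mem_UaddMod (hx : x ∈ UaddMod p J) : -x ∈ UaddMod p J := by
  obtain ⟨n, hn, h⟩ := hx
  exact ⟨n, hn, (neg_nsmul x n).symm ▸ neg_mem h⟩

theorem map_mem_UaddMod (f : B →+ B) (hf : ∀ y ∈ J, f y ∈ J) (hx : x ∈ UaddMod p J) :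
    f x ∈ UaddMod p J := by
  obtain ⟨n, hn, h⟩ := hx
  exact ⟨n, hn, map_nsmul f n x ▸ hf _ h⟩

theorem lam_mem_UaddMod (a : B) (hx : x ∈ UaddMod p J) : lam a x ∈ UaddMod p J :=
  map_mem_UaddMod (lamEnd a) (fun _ ↦ J.lam_mem a) hx

theorem addConj_mem_UaddMod (a : B) (hx : x ∈ UaddMod p J) : a + x + -a ∈ UaddMod p J :=
  map_mem_UaddMod (conjEnd (.ofAdd a)) (fun _ ↦ J.addConj_mem a) hx

theorem mulConj_mem_UmulMod (a : B) (hx : x ∈ UmulMod p J) : a * x * a⁻¹ ∈ UmulMod p J := by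
  obtain ⟨n, hn, h⟩ := hx
  exact ⟨n, hn, by rw [conj_pow]; exact J.mulConj_mem a h⟩

/-- `U_p^+(B / J)`, pulled back to `B`, as an ideal, in case it is closed under addition and agrees
with `U_p^·(B / J)`. -/
def UaddMod.braceIdeal (hadd : ∀ {x y}, x ∈ UaddMod p J → y ∈ UaddMod p J → x + y ∈ UaddMod p J)
    (heq : UaddMod p J = UmulMod p J) : BraceIdeal B where
  carrier := UaddMod p J
  zero_mem := subset_UaddMod p J (zero_mem J)
  add_mem := hadd
  neg_mem := neg_mem_UaddMod
  mul_mem {x y} hx hy := mul_eq_add_lam x y ▸ hadd hx (lam_mem_UaddMod x hy)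
  inv_mem {x} hx := inv_eq_neg_lam x ▸ neg_mem_UaddMod (lam_mem_UaddMod x⁻¹ hx)
  addConj_mem a _ := addConj_mem_UaddMod a
  mulConj_mem a {x} hx := by
    rw [heq] at hx ⊢
    exact mulConj_mem_UmulMod a hx
  lam_mem a _ := lam_mem_UaddMod a

/-- `K / J` is both `U_p^+(B / J)` and `U_p^·(B / J)`, and its order is finite and divisible only by
primes greater than `p`. -/
structure IsRoughRadical (p : ℕ) (J K : BraceIdeal B) : Prop where
  coe_eq_UaddMod : (K : Set B) = UaddMod p J
  coe_eq_UmulMod : (K : Set B) = UmulMod p J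
  isRough_relIndex : IsRough p (J.relIndex K)

variable {I K : BraceIdeal B}

theorem IsRoughRadical.le (h : IsRoughRadical p J K) : J ≤ K :=
  (subset_UaddMod p J).trans_eq h.coe_eq_UaddMod.symm

theorem isRoughRadical_self (hJ : ∀ x, x ∈ J) : IsRoughRadical p J J where
  coe_eq_UaddMod := Set.ext fun x ↦ iff_of_true (hJ x) (subset_UaddMod p J (hJ x))
  coe_eq_UmulMod := Set.ext fun x ↦ iff_of_true (hJ x) ⟨1, isRough_one p, hJ (x ^ 1)⟩
  isRough_relIndex := by
    rw [BraceIdeal.relIndex, AddSubgroup.relIndex_self]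
    exact isRough_one p

theorem UaddMod_eq_of_isRough_relIndex (hJI : J ≤ I) (hrough : IsRough p (J.relIndex I)) :
    UaddMod p J = UaddMod p I := by
  refine subset_antisymm (fun x ⟨n, hn, h⟩ ↦ ⟨n, hn, hJI h⟩) fun x ⟨n, hn, h⟩ ↦ ?_
  exact ⟨J.relIndex I * n, hrough.mul hn, mul_nsmul' x _ n ▸ nsmul_relIndex_mem J h⟩

theorem UmulMod_eq_of_isRough_relIndex (hJI : J ≤ I) (hrough : IsRough p (J.relIndex I)) :
    UmulMod p J = UmulMod p I := by
  refine subset_antisymm (fun x ⟨n, hn, h⟩ ↦ ⟨n, hn, hJI h⟩) fun x ⟨n, hn, h⟩ ↦ ?_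
  exact ⟨n * J.relIndex I, hn.mul hrough, pow_mul x n _ ▸ pow_relIndex_mem J h⟩

theorem IsRoughRadical.of_isRough_relIndex (hJI : J ≤ I) (hrough : IsRough p (J.relIndex I))
    (hK : IsRoughRadical p I K) : IsRoughRadical p J K where
  coe_eq_UaddMod := hK.coe_eq_UaddMod.trans (UaddMod_eq_of_isRough_relIndex hJI hrough).symm
  coe_eq_UmulMod := hK.coe_eq_UmulMod.trans (UmulMod_eq_of_isRough_relIndex hJI hrough).symm
  isRough_relIndex := relIndex_mul_relIndex hJI hK.le ▸ hrough.mul hK.isRough_relIndex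

end RelativeU

section TrivialCyclicFactor

variable {B : Type*} [SkewBrace B] {p n : ℕ} {I J K : BraceIdeal B} {i k x y : B}

theorem mk_lam_of_mk_lam_pow [IsAddCyclic (J.AddFactor I)]
    (hn : n ≠ 0) (hcop : n.Coprime (Nat.card (ZMod (J.relIndex I))ˣ))
    (hk : ∀ i ∈ I, ((lam (k ^ n) i : B) : B ⧸ J.addSubgroup) = i) :
    ∀ i ∈ I, ((lam k i : B) : B ⧸ J.addSubgroup) = i :=
  mk_apply_eq_of_mk_pow_apply_eq lamEnd (fun a _ ↦ I.lam_mem a) (fun a _ ↦ J.lam_mem a) hn hcop hk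

/-- The factor `I / J` is additively cyclic, infinite or of prime order at most `p`, and it is a
trivial brace, i.e. `λ_a(b) = b` for all `a, b ∈ I / J`. -/
structure IsTrivialCyclicFactor (p : ℕ) (J I : BraceIdeal B) : Prop where
  le : J ≤ I
  isAddCyclic : IsAddCyclic (J.AddFactor I)
  relIndex_eq_zero_or_prime : J.relIndex I = 0 ∨ (J.relIndex I).Prime ∧ J.relIndex I ≤ p
  mk_lam : ∀ a ∈ I, ∀ b ∈ I, ((lam a b : B) : B ⧸ J.addSubgroup) = b

namespace IsTrivialCyclicFactor

theorem mem_of_nsmul_mem (h : IsTrivialCyclicFactor p J I) (hn : IsRough p n) (hx : x ∈ I)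
    (hnx : n • x ∈ J) : x ∈ J := by
  have := h.isAddCyclic
  let x' : J.AddFactor I := (⟨x, hx⟩ : I.addSubgroup)
  have hnx' : n • x' = 0 := (QuotientAddGroup.eq_zero_iff _).2 hnx
  exact (QuotientAddGroup.eq_zero_iff _).1
    (hn.eq_zero_of_nsmul_eq_zero h.relIndex_eq_zero_or_prime hnx')

theorem mk_lam_of_isRough (h : IsTrivialCyclicFactor p J I) (hp : 2 ≤ p)
    (hrough : IsRough p (I.relIndex K)) (hk : k ∈ K) :
    ∀ i ∈ I, ((lam k i : B) : B ⧸ J.addSubgroup) = i :=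
  have := h.isAddCyclic
  mk_lam_of_mk_lam_pow hrough.1 (hrough.coprime_card_units_zmod hp h.relIndex_eq_zero_or_prime)
    (h.mk_lam _ (pow_relIndex_mem I hk))

theorem addCommute_mk_of_isRough (h : IsTrivialCyclicFactor p J I) (hp : 2 ≤ p)
    (hrough : IsRough p (I.relIndex K)) (hk : k ∈ K) (hi : i ∈ I) :
    AddCommute (k : B ⧸ J.addSubgroup) i := by
  have := h.isAddCyclic
  have hconj : ∀ i ∈ I, ((conjEnd (.ofAdd k) i : B) : B ⧸ J.addSubgroup) = i := by
    refine mk_apply_eq_of_mk_pow_apply_eq conjEnd (fun a _ ↦ I.addConj_mem a.toAdd)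
      (fun a _ ↦ J.addConj_mem a.toAdd) hrough.1
      (hrough.coprime_card_units_zmod hp h.relIndex_eq_zero_or_prime) fun i hi ↦ ?_
    exact add_neg_eq_of_eq_add (addCommute_mk (nsmul_relIndex_mem I hk) hi)
  exact add_neg_eq_iff_eq_add.1 (hconj i hi)

theorem mk_nsmul_relIndex_add (h : IsTrivialCyclicFactor p J I) (hp : 2 ≤ p) (hIK : I ≤ K)
    (hrough : IsRough p (I.relIndex K)) (hx : x ∈ K) (hy : y ∈ K) :
    ((I.relIndex K • (x + y) : B) : B ⧸ J.addSubgroup)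
      = ↑(I.relIndex K • x) + ↑(I.relIndex K • y) :=
  SkewBrace.mk_nsmul_relIndex_add h.le (h.le.trans hIK)
    (fun _ hi _ hk ↦ h.addCommute_mk_of_isRough hp hrough hk hi) hrough.1 hx hy

theorem mk_nsmul_relIndex_mul (h : IsTrivialCyclicFactor p J I) (hp : 2 ≤ p) (hIK : I ≤ K)
    (hrough : IsRough p (I.relIndex K)) (hx : x ∈ K) (hy : y ∈ K) :
    ((I.relIndex K • (x * y) : B) : B ⧸ J.addSubgroup)
      = ↑(I.relIndex K • x) + ↑(I.relIndex K • y) := by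
  have hlam : I.relIndex K • lam x y = lam x (I.relIndex K • y) :=
    (map_nsmul (lamEnd x) (I.relIndex K) y).symm
  rw [mul_eq_add_lam, h.mk_nsmul_relIndex_add hp hIK hrough hx (K.lam_mem x hy), hlam,
    h.mk_lam_of_isRough hp hrough hx _ (nsmul_relIndex_mem I hy)]

theorem mk_nsmul_relIndex_pow (h : IsTrivialCyclicFactor p J I) (hp : 2 ≤ p) (hIK : I ≤ K)
    (hrough : IsRough p (I.relIndex K)) (hx : x ∈ K) (n : ℕ) :
    ((I.relIndex K • x ^ n : B) : B ⧸ J.addSubgroup) = n • ↑(I.relIndex K • x) := by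
  induction n with
  | zero => rw [pow_zero, one_eq_zero, nsmul_zero, zero_nsmul, QuotientAddGroup.mk_zero]
  | succ n ih =>
    rw [pow_succ, h.mk_nsmul_relIndex_mul hp hIK hrough (pow_mem hx n) hx, ih, succ_nsmul]

theorem mem_UaddMod_iff (h : IsTrivialCyclicFactor p J I) (hK : IsRoughRadical p I K) :
    x ∈ UaddMod p J ↔ x ∈ K ∧ I.relIndex K • x ∈ J := by
  refine ⟨fun ⟨n, hn, hx⟩ ↦ ?_, fun hx ↦ ⟨_, hK.isRough_relIndex, hx.2⟩⟩
  have hxK : x ∈ K := hK.coe_eq_UaddMod.ge ⟨n, hn, h.le hx⟩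
  refine ⟨hxK, h.mem_of_nsmul_mem hn (nsmul_relIndex_mem I hxK) ?_⟩
  exact nsmul_left_comm x n _ ▸ nsmul_mem hx _

theorem mem_UmulMod_iff (h : IsTrivialCyclicFactor p J I) (hp : 2 ≤ p)
    (hK : IsRoughRadical p I K) : x ∈ UmulMod p J ↔ x ∈ K ∧ I.relIndex K • x ∈ J := by
  have hpow (hx : x ∈ K) (n : ℕ) : I.relIndex K • x ^ n ∈ J ↔ n • I.relIndex K • x ∈ J := by
    rw [← mk_eq_zero_iff, h.mk_nsmul_relIndex_pow hp hK.le hK.isRough_relIndex hx,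
      ← QuotientAddGroup.mk_nsmul, mk_eq_zero_iff]
  constructor
  · rintro ⟨n, hn, hx⟩
    have hxK : x ∈ K := hK.coe_eq_UmulMod.ge ⟨n, hn, h.le hx⟩
    exact ⟨hxK, h.mem_of_nsmul_mem hn (nsmul_relIndex_mem I hxK) ((hpow hxK n).1 (nsmul_mem hx _))⟩
  · rintro ⟨hxK, hx⟩
    exact ⟨_, hK.isRough_relIndex, h.mem_of_nsmul_mem hK.isRough_relIndex (pow_relIndex_mem I hxK)
      ((hpow hxK _).2 (nsmul_mem hx _))⟩

theorem add_mem_UaddMod (h : IsTrivialCyclicFactor p J I) (hp : 2 ≤ p)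
    (hK : IsRoughRadical p I K) (hx : x ∈ UaddMod p J) (hy : y ∈ UaddMod p J) :
    x + y ∈ UaddMod p J := by
  rw [h.mem_UaddMod_iff hK] at hx hy ⊢
  refine ⟨add_mem hx.1 hy.1, ?_⟩
  rw [← mk_eq_zero_iff, h.mk_nsmul_relIndex_add hp hK.le hK.isRough_relIndex hx.1 hy.1,
    mk_eq_zero_iff.2 hx.2, mk_eq_zero_iff.2 hy.2, add_zero]

theorem exists_isRoughRadical (h : IsTrivialCyclicFactor p J I) (hp : 2 ≤ p)
    (hK : IsRoughRadical p I K) : ∃ K', IsRoughRadical p J K' := by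
  have heq : UaddMod p J = UmulMod p J :=
    Set.ext fun x ↦ (h.mem_UaddMod_iff hK).trans (h.mem_UmulMod_iff hp hK).symm
  let K' : BraceIdeal B := UaddMod.braceIdeal (h.add_mem_UaddMod hp hK) heq
  have hle : K'.addSubgroup ≤ K.addSubgroup := fun x hx ↦ ((h.mem_UaddMod_iff hK).1 hx).1
  have hinf : I.addSubgroup ⊓ K'.addSubgroup = J.addSubgroup := by
    ext x
    refine ⟨fun ⟨hxI, n, hn, hx⟩ ↦ h.mem_of_nsmul_mem hn hxI hx, fun hx ↦ ?_⟩
    exact ⟨h.le hx, subset_UaddMod p J hx⟩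
  have hdvd : J.relIndex K' ∣ I.relIndex K := by
    rw [BraceIdeal.relIndex, ← hinf, AddSubgroup.inf_relIndex_right,
      ← AddSubgroup.relIndex_addSubgroupOf hle]
    exact AddSubgroup.relIndex_dvd_index_of_normal _ _
  exact ⟨K', rfl, heq, hK.isRough_relIndex.of_dvd hdvd⟩

end IsTrivialCyclicFactor

end TrivialCyclicFactor

section Supersoluble

variable {B : Type*} [SkewBrace B] {p q : ℕ} {I J : BraceIdeal B} {x₀ : B}

theorem zmultiples_mk_eq_top (hx₀ : x₀ ∈ I) (hgen : ∀ y ∈ I, ∃ n : ℤ, -(n • x₀) + y ∈ J) :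
    AddSubgroup.zmultiples (((⟨x₀, hx₀⟩ : I.addSubgroup)) : J.AddFactor I) = ⊤ := by
  rw [AddSubgroup.eq_top_iff']
  intro y
  induction y using QuotientAddGroup.induction_on with
  | H y =>
    obtain ⟨n, hn⟩ := hgen y y.2
    exact ⟨n, QuotientAddGroup.eq.2 hn⟩

theorem isAddCyclic_and_relIndex_eq_zero_of_quotAddInfCyclic
    (h : QuotAddInfCyclic (J : Set B) I) : IsAddCyclic (J.AddFactor I) ∧ J.relIndex I = 0 := by
  obtain ⟨x₀, hx₀, hgen, hfree⟩ := h
  have htop := zmultiples_mk_eq_top hx₀ hgen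
  refine ⟨isAddCyclic_iff_exists_zmultiples_eq_top.2 ⟨_, htop⟩,
    (addOrderOf_eq_card_of_zmultiples_eq_top htop).symm.trans ?_⟩
  refine addOrderOf_eq_zero_iff'.2 fun n hn hnx ↦ hn.ne' (Int.natCast_eq_zero.1 (hfree n ?_))
  rw [natCast_zsmul]
  exact (QuotientAddGroup.eq_zero_iff _).1 hnx

theorem isAddCyclic_and_relIndex_eq_of_quotPrimeOrder (h : QuotPrimeOrder (J : Set B) I q) :
    IsAddCyclic (J.AddFactor I) ∧ J.relIndex I = q := by
  obtain ⟨hq, x₀, hx₀, hx₀J, hqx₀, hgen⟩ := h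
  have := Fact.mk hq
  have htop := zmultiples_mk_eq_top hx₀ hgen
  refine ⟨isAddCyclic_iff_exists_zmultiples_eq_top.2 ⟨_, htop⟩,
    (addOrderOf_eq_card_of_zmultiples_eq_top htop).symm.trans ?_⟩
  exact addOrderOf_eq_prime ((QuotientAddGroup.eq_zero_iff _).2 hqx₀)
    fun hx₀0 ↦ hx₀J ((QuotientAddGroup.eq_zero_iff _).1 hx₀0)

theorem isTrivialCyclicFactor_of_quotAddInfCyclic (p : ℕ) (hJI : J ≤ I)
    (hcyc : QuotAddInfCyclic (J : Set B) I) (hsoc : ∀ x ∈ I, MemSocQuot (J : Set B) x) :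
    IsTrivialCyclicFactor p J I where
  le := hJI
  isAddCyclic := (isAddCyclic_and_relIndex_eq_zero_of_quotAddInfCyclic hcyc).1
  relIndex_eq_zero_or_prime := .inl (isAddCyclic_and_relIndex_eq_zero_of_quotAddInfCyclic hcyc).2
  mk_lam a ha b _ := (QuotientAddGroup.eq.2 ((hsoc a ha).2.1 b trivial)).symm

theorem isTrivialCyclicFactor_of_quotPrimeOrder (hJI : J ≤ I)
    (hq : QuotPrimeOrder (J : Set B) I q) (hqp : q ≤ p) : IsTrivialCyclicFactor p J I where
  le := hJI
  isAddCyclic := (isAddCyclic_and_relIndex_eq_of_quotPrimeOrder hq).1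
  relIndex_eq_zero_or_prime :=
    .inr ((isAddCyclic_and_relIndex_eq_of_quotPrimeOrder hq).2 ▸ ⟨hq.1, hqp⟩)
  mk_lam a ha := by
    obtain ⟨hcyc, hindex⟩ := isAddCyclic_and_relIndex_eq_of_quotPrimeOrder hq
    have hcop : q.Coprime (Nat.card (ZMod (J.relIndex I))ˣ) := by
      rw [hindex, card_units_zmod_of_prime hq.1]
      exact (Nat.coprime_self_sub_right hq.1.one_le).2 (Nat.coprime_one_right q)
    refine mk_lam_of_mk_lam_pow hq.1.ne_zero hcop fun i _ ↦ mk_lam_of_mem ?_ i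
    exact hindex ▸ pow_relIndex_mem J ha

theorem exists_isRoughRadical_of_factor (hp : 2 ≤ p) (hJI : J ≤ I)
    (hfactor : (QuotAddInfCyclic (J : Set B) I ∧ ∀ x ∈ I, MemSocQuot (J : Set B) x) ∨
      ∃ q, QuotPrimeOrder (J : Set B) I q)
    (hI : ∃ K, IsRoughRadical p I K) : ∃ K, IsRoughRadical p J K := by
  obtain ⟨K, hK⟩ := hI
  rcases hfactor with ⟨hcyc, hsoc⟩ | ⟨q, hq⟩
  · exact (isTrivialCyclicFactor_of_quotAddInfCyclic p hJI hcyc hsoc).exists_isRoughRadical hp hK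
  rcases le_or_gt q p with hqp | hpq
  · exact (isTrivialCyclicFactor_of_quotPrimeOrder hJI hq hqp).exists_isRoughRadical hp hK
  · have hrough : IsRough p (J.relIndex I) :=
      (isAddCyclic_and_relIndex_eq_of_quotPrimeOrder hq).2 ▸ isRough_of_prime hq.1 hpq
    exact ⟨K, hK.of_isRough_relIndex hJI hrough⟩

theorem UaddMod_eq_Uadd (hJ : (J : Set B) = {0}) : UaddMod p J = Uadd p B := by
  have hmem (x : B) (n : ℕ) : n • x ∈ J ↔ n • x = 0 := Set.ext_iff.1 hJ (n • x)
  simp only [UaddMod, hmem]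
  exact Set.ext fun x ↦ ⟨fun ⟨n, hn, hx⟩ ↦ hn.of_dvd (addOrderOf_dvd_of_nsmul_eq_zero hx),
    fun hx ↦ ⟨_, hx, addOrderOf_nsmul_eq_zero x⟩⟩

theorem UmulMod_eq_Umul (hJ : (J : Set B) = {0}) : UmulMod p J = Umul p B := by
  have hmem (x : B) (n : ℕ) : x ^ n ∈ J ↔ x ^ n = 1 := by
    rw [one_eq_zero]
    exact Set.ext_iff.1 hJ (x ^ n)
  simp only [UmulMod, hmem]
  exact Set.ext fun x ↦ ⟨fun ⟨n, hn, hx⟩ ↦ hn.of_dvd (orderOf_dvd_of_pow_eq_one hx),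
    fun hx ↦ ⟨_, hx, pow_orderOf_eq_one x⟩⟩

end Supersoluble

theorem Uadd_eq_Umul_and_ideal_general (B : Type*) [SkewBrace B] (hB : IsSupersoluble B)
    (p : ℕ) (hp : 2 ≤ p) :
    Uadd p B = Umul p B ∧ ∃ I : BraceIdeal B, I.carrier = Uadd p B := by
  obtain ⟨n, I, hzero, htop, hle, hfactor⟩ := hB
  obtain ⟨K, hK⟩ : ∃ K, IsRoughRadical p (I 0) K :=
    Nat.decreasingInduction' (P := fun i ↦ ∃ K, IsRoughRadical p (I i) K)
      (fun i hi _ ↦ exists_isRoughRadical_of_factor hp (hle i hi) (hfactor i hi)) n.zero_le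
      ⟨I n, isRoughRadical_self fun x ↦ htop.ge (Set.mem_univ x)⟩
  have hadd : (K : Set B) = Uadd p B := hK.coe_eq_UaddMod.trans (UaddMod_eq_Uadd hzero)
  have hmul : (K : Set B) = Umul p B := hK.coe_eq_UmulMod.trans (UmulMod_eq_Umul hzero)
  exact ⟨hadd.symm.trans hmul, K, hadd⟩

/-- In a supersoluble brace `B`, for every prime `p`, `U_p^+(B) = U_p^·(B)` and this
set is an ideal of `B`. -/
theorem Uadd_eq_Umul_and_ideal (B : Type*) [SkewBrace B] (hB : IsSupersoluble B)
    (p : ℕ) (hp : p.Prime) :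
    Uadd p B = Umul p B ∧ ∃ I : BraceIdeal B, I.carrier = Uadd p B :=
  Uadd_eq_Umul_and_ideal_general B hB p hp.two_le

end SkewBrace
end

section
/- Let B be a finite brace such that every Sylow subgroup of (B,+) and every Sylow subgroup of (B,·) is cyclic. Then B is supersoluble. -/
/-!
Let `I` be a proper ideal of `B` and `p` the largest prime dividing the index of `I`. In a finite
group all of whose Sylow subgroups are cyclic, Burnside's transfer theorem makes the Sylow subgroup
for the largest prime normal. Being cyclic as well, it contains a unique subgroup of order `p`,
which consists of the solutions of `x ^ p = 1`. Applied to `(B/I, +)`, this shows that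
`J = {x | p • x ∈ I}` is a normal additive subgroup with `|J/I| = p`; its description by an equation
makes it invariant under every `λ_b`, so it is also a multiplicative subgroup. As `J` has index `p`
over `I` in `(B, ·)` too, the same fact applied to `(B/I, ·)` gives `J = {x | x ^ p ∈ I}`, so `J` is
normal in `(B, ·)`. Thus every proper ideal lies below an ideal with quotient of prime order, and
finiteness yields the chain.
-/

section GroupTheory

open Subgroup

variable {G : Type*} [Group G] {p : ℕ}

theorem le_of_coprime_card_index {H N : Subgroup G} [N.Normal]
    (h : (Nat.card H).Coprime N.index) : H ≤ N :=
  relIndex_eq_one.mp <|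
    Nat.eq_one_of_dvd_coprimes h (relIndex_dvd_card N H) (relIndex_dvd_index_of_normal N H)

theorem sylow_normal_of_subtype_normal [Fact p.Prime] {N : Subgroup G} [N.Normal]
    [Finite (Sylow p N)] {P : Sylow p G} (hPN : P ≤ N) (hP : (P.subtype hPN : Subgroup N).Normal) :
    P.Normal := by
  have := Sylow.characteristic_of_normal _ hP
  have hmap : (P.subtype hPN : Subgroup N).map N.subtype = P := by
    rw [Sylow.coe_subtype, map_subgroupOf_eq_of_le hPN]
  exact hmap ▸ inferInstance

theorem isPGroup_of_minFac_card_eq [Finite G] [hp : Fact p.Prime] (hmin : (Nat.card G).minFac = p)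
    (hmax : p ∈ upperBounds ((Nat.card G).primeFactors : Set ℕ)) : IsPGroup p G := by
  refine (isPGroup_iff_primeFactors_card_subset hp.out.ne_zero).mpr fun r hr => ?_
  have hpr : p ≤ r := hmin ▸ Nat.minFac_le_of_dvd (Nat.prime_of_mem_primeFactors hr).two_le
    (Nat.dvd_of_mem_primeFactors hr)
  rw [hp.out.primeFactors, Finset.mem_singleton]
  exact (hmax hr).antisymm hpr

theorem sylow_normal_of_isZGroup [Finite G] [IsZGroup G] [Fact p.Prime]
    (hmax : p ∈ upperBounds ((Nat.card G).primeFactors : Set ℕ)) (P : Sylow p G) : P.Normal := by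
  induction hn : Nat.card G using Nat.strong_induction_on generalizing G with
  | _ n ih =>
  subst hn
  by_cases hG : IsPGroup p G
  · rw [← P.is_maximal' (hG.to_subgroup ⊤) le_top]
    infer_instance
  have hcard : Nat.card G ≠ 1 := fun h => hG (.of_card (n := 0) h)
  let q := (Nat.card G).minFac
  have : Fact q.Prime := ⟨Nat.minFac_prime hcard⟩
  have hpq : p ≠ q := fun hpq => hG (isPGroup_of_minFac_card_eq hpq.symm hmax)
  let Q : Sylow q G := default
  obtain ⟨N, hN, hNQ⟩ : ∃ N : Subgroup G, N.Normal ∧ N.IsComplement' Q :=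
    ⟨_, MonoidHom.normal_ker _, IsCyclic.isComplement' rfl inferInstance⟩
  have hindex : N.index = Nat.card (Q : Subgroup G) := hNQ.symm.index_eq_card
  have hPN : (P : Subgroup G) ≤ N := le_of_coprime_card_index <| hindex ▸
    IsPGroup.coprime_card_of_ne p q hpq (P : Subgroup G) (Q : Subgroup G) P.2 Q.2
  have hNlt : Nat.card N < Nat.card G := by
    have hQ : 1 < Nat.card (Q : Subgroup G) :=
      (one_lt_card_iff_ne_bot _).mpr (Q.ne_bot_of_dvd_card (Nat.minFac_dvd _))
    rw [← N.card_mul_index, hindex]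
    exact lt_mul_of_one_lt_right Nat.card_pos hQ
  have hmaxN : p ∈ upperBounds ((Nat.card N).primeFactors : Set ℕ) := fun r hr =>
    hmax (Nat.primeFactors_mono N.card_subgroup_dvd_card Nat.card_pos.ne' hr)
  exact sylow_normal_of_subtype_normal hPN (ih _ hNlt hmaxN _ rfl)

theorem mem_iff_pow_card_eq_one_of_isCyclic [Finite G] [IsCyclic G] {H : Subgroup G} {x : G} :
    x ∈ H ↔ x ^ Nat.card H = 1 := by
  let _ : CommGroup G := IsCyclic.commGroup
  have hle : H ≤ (powMonoidHom (Nat.card H) : G →* G).ker := fun y hy =>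
    Subtype.ext_iff.mp (pow_card_eq_one' (x := (⟨y, hy⟩ : H)))
  have heq : H = (powMonoidHom (Nat.card H) : G →* G).ker := by
    refine eq_of_le_of_card_ge hle ?_
    rw [IsCyclic.card_powMonoidHom_ker]
    exact Nat.gcd_le_right _ Nat.card_pos
  conv_lhs => rw [heq]
  exact MonoidHom.mem_ker

theorem le_sylow_of_sylow_normal [Fact p.Prime] [Finite (Sylow p G)] {P : Sylow p G} (hP : P.Normal)
    {H : Subgroup G} (hH : IsPGroup p H) : H ≤ P := by
  obtain ⟨Q, hHQ⟩ := hH.exists_le_sylow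
  have := P.unique_of_normal hP
  rwa [Subsingleton.elim P Q]

theorem mem_iff_pow_card_eq_one_of_sylow [Finite G] [Fact p.Prime] {P : Sylow p G} [IsCyclic P]
    (hP : P.Normal) {H : Subgroup G} (hH : IsPGroup p H) {x : G} :
    x ∈ H ↔ x ^ Nat.card H = 1 := by
  have hHP : H ≤ P := le_sylow_of_sylow_normal hP hH
  have hmem (hxP : x ∈ P) : x ∈ H ↔ x ^ Nat.card H = 1 := by
    have hcard : Nat.card (H.subgroupOf P) = Nat.card H :=
      Nat.card_congr (subgroupOfEquivOfLe hHP).toEquiv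
    have := mem_iff_pow_card_eq_one_of_isCyclic (H := H.subgroupOf P) (x := ⟨x, hxP⟩)
    rwa [hcard, mem_subgroupOf, Subtype.ext_iff] at this
  refine ⟨fun hx => (hmem (hHP hx)).mp hx, fun hx => (hmem ?_).mpr hx⟩
  obtain ⟨n, hn⟩ := IsPGroup.iff_card.mp hH
  have hzpowers : IsPGroup p (zpowers x) := .of_card_dvd_pow (n := n) <| by
    rw [Nat.card_zpowers, ← hn]
    exact orderOf_dvd_of_pow_eq_one hx
  exact le_sylow_of_sylow_normal hP hzpowers (mem_zpowers x)

theorem mem_iff_pow_mem_of_isZGroup [Finite G] [IsZGroup G] [Fact p.Prime] {N H : Subgroup G}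
    [N.Normal] (hmax : p ∈ upperBounds (N.index.primeFactors : Set ℕ)) (hNH : N ≤ H)
    (hindex : N.relIndex H = p) {x : G} : x ∈ H ↔ x ^ p ∈ N := by
  have hcard : Nat.card (H.map (QuotientGroup.mk' N)) = p := by
    rw [← relIndex_ker, QuotientGroup.ker_mk', hindex]
  have hmap : IsPGroup p (H.map (QuotientGroup.mk' N)) :=
    .of_card (n := 1) (hcard.trans (pow_one p).symm)
  have hcomap : (H.map (QuotientGroup.mk' N)).comap (QuotientGroup.mk' N) = H := by
    rw [QuotientGroup.comap_map_mk', sup_eq_right.mpr hNH]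
  have hsylow : ((default : Sylow p (G ⧸ N)) : Subgroup (G ⧸ N)).Normal :=
    sylow_normal_of_isZGroup hmax _
  rw [← hcomap, mem_comap, mem_iff_pow_card_eq_one_of_sylow hsylow hmap, hcard, ← map_pow,
    QuotientGroup.mk'_apply, QuotientGroup.eq_one_iff]

theorem subgroup_normal_of_relIndex_eq_of_isZGroup [Finite G] [IsZGroup G] [Fact p.Prime]
    {N H : Subgroup G} [hN : N.Normal] (hmax : p ∈ upperBounds (N.index.primeFactors : Set ℕ))
    (hNH : N ≤ H) (hindex : N.relIndex H = p) : H.Normal where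
  conj_mem x hx g := by
    rw [mem_iff_pow_mem_of_isZGroup hmax hNH hindex] at hx ⊢
    rw [conj_pow]
    exact hN.conj_mem _ hx g

@[to_additive]
theorem exists_subgroup_relIndex_eq_of_prime_dvd_index [Fact p.Prime] (N : Subgroup G) [N.Normal]
    [N.FiniteIndex] (hp : p ∣ N.index) : ∃ H : Subgroup G, N ≤ H ∧ N.relIndex H = p := by
  obtain ⟨x, hx⟩ := exists_prime_orderOf_dvd_card' (G := G ⧸ N) p hp
  refine ⟨(zpowers x).comap (QuotientGroup.mk' N), QuotientGroup.le_comap_mk' N _, ?_⟩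
  nth_rw 1 [← QuotientGroup.ker_mk' N]
  rw [relIndex_ker, map_comap_eq_self_of_surjective (QuotientGroup.mk'_surjective N),
    Nat.card_zpowers, hx]

section AddGroup

variable {A : Type*} [AddGroup A] [Finite A] [IsZGroup (Multiplicative A)] [Fact p.Prime]
  {N H : AddSubgroup A} [hN : N.Normal]

theorem mem_iff_nsmul_mem_of_isZGroup (hmax : p ∈ upperBounds (N.index.primeFactors : Set ℕ))
    (hNH : N ≤ H) (hindex : N.relIndex H = p) {x : A} : x ∈ H ↔ p • x ∈ N :=
  have : N.toSubgroup.Normal := ⟨hN.conj_mem⟩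
  mem_iff_pow_mem_of_isZGroup (N := N.toSubgroup) (H := H.toSubgroup) hmax hNH hindex

theorem addSubgroup_normal_of_relIndex_eq_of_isZGroup
    (hmax : p ∈ upperBounds (N.index.primeFactors : Set ℕ))
    (hNH : N ≤ H) (hindex : N.relIndex H = p) : H.Normal :=
  have : N.toSubgroup.Normal := ⟨hN.conj_mem⟩
  ⟨(subgroup_normal_of_relIndex_eq_of_isZGroup (N := N.toSubgroup) (H := H.toSubgroup)
    hmax hNH hindex).conj_mem⟩

end AddGroup

end GroupTheory

namespace SkewBrace

section

variable {B : Type*} [SkewBrace B]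

/-- The additive endomorphism `λ_a` of `(B, +)`; bundling it gives access to the homomorphism
API. -/
def lamHom (a : B) : B →+ B :=
  AddMonoidHom.mk' (lam a) fun b c => by
    simp only [lam, skew_distrib, add_assoc]

/-- A `λ`-invariant additive subgroup (a left ideal of the brace) as a subbrace. -/
def Subbrace.ofLamInvariant (H : AddSubgroup B) (hH : ∀ a, ∀ b ∈ H, lam a b ∈ H) :
    Subbrace B where
  carrier := H
  zero_mem := H.zero_mem
  add_mem := H.add_mem
  neg_mem := H.neg_mem
  mul_mem {a b} ha hb := mul_eq_add_lam a b ▸ H.add_mem ha (hH a b hb)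
  inv_mem {a} ha := inv_eq_neg_lam a ▸ H.neg_mem (hH _ a ha)

/-- An ideal assembled from its three normality conditions, each on a standard object: a
`λ`-invariant additive subgroup that is normal in `(B, +)` and in `(B, ·)`. -/
def BraceIdeal.ofNormal (H : AddSubgroup B) (hH : ∀ a, ∀ b ∈ H, lam a b ∈ H)
    (hadd : H.Normal) (hmul : (Subbrace.ofLamInvariant H hH).subgroup.Normal) : BraceIdeal B where
  toSubbrace := Subbrace.ofLamInvariant H hH
  addConj_mem b _ ha := hadd.conj_mem _ ha b
  mulConj_mem b _ ha := hmul.conj_mem _ ha b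
  lam_mem b _ ha := hH b _ ha

theorem lam_mem_bot (a b : B) (hb : b ∈ (⊥ : AddSubgroup B)) : lam a b ∈ (⊥ : AddSubgroup B) := by
  rw [AddSubgroup.mem_bot] at hb ⊢
  exact hb ▸ map_zero (lamHom a)

theorem subgroup_ofLamInvariant_bot :
    (Subbrace.ofLamInvariant (⊥ : AddSubgroup B) lam_mem_bot).subgroup = ⊥ :=
  (Subgroup.eq_bot_iff_forall _).mpr fun _ hx => (AddSubgroup.mem_bot.mp hx).trans one_eq_zero.symm

/-- The zero ideal `{0}`. -/
instance : Bot (BraceIdeal B) where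
  bot := .ofNormal ⊥ lam_mem_bot AddSubgroup.normal_bot
    (subgroup_ofLamInvariant_bot (B := B) ▸ Subgroup.normal_bot)

instance BraceIdeal.addSubgroup_normal (I : BraceIdeal B) : I.addSubgroup.Normal :=
  ⟨fun _ ha b => I.addConj_mem b ha⟩

instance BraceIdeal.subgroup_normal (I : BraceIdeal B) : I.subgroup.Normal :=
  ⟨fun _ ha b => I.mulConj_mem b ha⟩

theorem Subbrace.index_subgroup [Finite B] (S : Subbrace B) :
    S.subgroup.index = S.addSubgroup.index := by
  have hcard : Nat.card S.subgroup * S.subgroup.index =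
      Nat.card S.addSubgroup * S.addSubgroup.index :=
    S.subgroup.card_mul_index.trans S.addSubgroup.card_mul_index.symm
  exact Nat.eq_of_mul_eq_mul_left Nat.card_pos hcard

theorem Subbrace.relIndex_subgroup [Finite B] {S T : Subbrace B} (h : S.carrier ⊆ T.carrier) :
    S.subgroup.relIndex T.subgroup = S.addSubgroup.relIndex T.addSubgroup := by
  have hsub := Subgroup.relIndex_mul_index (H := S.subgroup) (K := T.subgroup) h
  have hadd := AddSubgroup.relIndex_mul_index (H := S.addSubgroup) (K := T.addSubgroup) h
  rw [S.index_subgroup, T.index_subgroup, ← hadd] at hsub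
  exact Nat.eq_of_mul_eq_mul_right (Nat.pos_of_ne_zero AddSubgroup.index_ne_zero_of_finite) hsub

theorem quotPrimeOrder_of_relIndex_eq {p : ℕ} (hp : p.Prime) {H K : AddSubgroup B} [H.Normal]
    (h : H.relIndex K = p) : QuotPrimeOrder (H : Set B) K p := by
  have := Fact.mk hp
  have hKH : ¬K ≤ H := fun hKH => hp.ne_one (h ▸ AddSubgroup.relIndex_eq_one.mpr hKH)
  obtain ⟨x, hxK, hxH⟩ := SetLike.not_le_iff_exists.mp hKH
  refine ⟨hp, x, hxK, hxH, h ▸ H.nsmul_relIndex_mem hxK, fun y hyK => ?_⟩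
  let x' : K := ⟨x, hxK⟩
  let y' : K := ⟨y, hyK⟩
  have hx' : (x' : K ⧸ H.addSubgroupOf K) ≠ 0 := fun hx' =>
    hxH ((QuotientAddGroup.eq_zero_iff x').mp hx')
  obtain ⟨n, hn⟩ := mem_zmultiples_of_prime_card (g' := (y' : K ⧸ H.addSubgroupOf K)) h hx'
  exact ⟨n, QuotientAddGroup.eq (s := H.addSubgroupOf K) (a := n • x') (b := y') |>.mp hn⟩

theorem exists_braceIdeal_relIndex_eq [Finite B] [IsZGroup B] [IsZGroup (Multiplicative B)]
    {p : ℕ} (I : BraceIdeal B)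
    (hp : IsGreatest (I.addSubgroup.index.primeFactors : Set ℕ) p) :
    ∃ J : BraceIdeal B, I.carrier ⊆ J.carrier ∧ I.addSubgroup.relIndex J.addSubgroup = p := by
  have := Fact.mk (Nat.prime_of_mem_primeFactors hp.1)
  obtain ⟨H, hIH, hindex⟩ := exists_addSubgroup_relIndex_eq_of_prime_dvd_index I.addSubgroup
    (Nat.dvd_of_mem_primeFactors hp.1)
  have hlam (a b : B) (hb : b ∈ H) : lam a b ∈ H := by
    rw [mem_iff_nsmul_mem_of_isZGroup hp.2 hIH hindex] at hb ⊢
    exact map_nsmul (lamHom a) p b ▸ I.lam_mem a hb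
  let J := Subbrace.ofLamInvariant H hlam
  have hadd : H.Normal := addSubgroup_normal_of_relIndex_eq_of_isZGroup hp.2 hIH hindex
  have hmul : J.subgroup.Normal := subgroup_normal_of_relIndex_eq_of_isZGroup
    (I.index_subgroup.symm ▸ hp.2) hIH ((Subbrace.relIndex_subgroup hIH).trans hindex)
  exact ⟨.ofNormal H hlam hadd hmul, hIH, hindex⟩

theorem exists_quotPrimeOrder_of_ne_univ [Finite B] [IsZGroup B] [IsZGroup (Multiplicative B)]
    (I : BraceIdeal B) (hI : I.carrier ≠ Set.univ) :
    ∃ J : BraceIdeal B, I.carrier ⊆ J.carrier ∧ ∃ p, QuotPrimeOrder I.carrier J.carrier p := by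
  have hne_one : I.addSubgroup.index ≠ 1 := fun h =>
    hI (congrArg SetLike.coe (AddSubgroup.index_eq_one.mp h))
  have hone_lt : 1 < I.addSubgroup.index :=
    Nat.one_lt_iff_ne_zero_and_ne_one.mpr ⟨AddSubgroup.index_ne_zero_of_finite, hne_one⟩
  have hp := Finset.isGreatest_max' _ (Nat.nonempty_primeFactors.mpr hone_lt)
  obtain ⟨J, hIJ, hJ⟩ := exists_braceIdeal_relIndex_eq I hp
  exact ⟨J, hIJ, _, quotPrimeOrder_of_relIndex_eq (Nat.prime_of_mem_primeFactors hp.1) hJ⟩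

theorem QuotPrimeOrder.not_subset {I J : Set B} {p : ℕ} (h : QuotPrimeOrder I J p) : ¬J ⊆ I :=
  let ⟨_, _, hxJ, hxI, _⟩ := h
  fun hJI => hxI (hJI hxJ)

theorem isSupersoluble_of_forall_exists_quotPrimeOrder [Finite B]
    (h : ∀ I : BraceIdeal B, I.carrier ≠ Set.univ →
      ∃ J : BraceIdeal B, I.carrier ⊆ J.carrier ∧ ∃ p, QuotPrimeOrder I.carrier J.carrier p) :
    IsSupersoluble B := by
  choose! next hsub hprime using h
  let I (n : ℕ) : BraceIdeal B := next^[n] ⊥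
  have hsucc (n : ℕ) : I (n + 1) = next (I n) := Function.iterate_succ_apply' next n ⊥
  have hreach : ∃ n, (I n).carrier = Set.univ := by
    by_contra! hne
    have hmono : StrictMono fun n => (I n).carrier := strictMono_nat_of_lt_succ fun n => by
      obtain ⟨p, hp⟩ := hprime _ (hne n)
      rw [hsucc]
      exact ⟨hsub _ (hne n), hp.not_subset⟩
    exact not_injective_infinite_finite _ hmono.injective
  classical
  refine ⟨Nat.find hreach, I, rfl, Nat.find_spec hreach, fun i hi => ?_, fun i hi => .inr ?_⟩
  · exact hsucc i ▸ hsub _ (Nat.find_min hreach hi)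
  · exact hsucc i ▸ hprime _ (Nat.find_min hreach hi)

end

/-- A finite brace all of whose additive and multiplicative Sylow subgroups are
cyclic is supersoluble. (The Sylow subgroups of the additive group `(B,+)` are
the Sylow subgroups of `Multiplicative B`.) -/
theorem isSupersoluble_of_sylow_cyclic (B : Type*) [SkewBrace B] [Finite B]
    (hadd : ∀ (p : ℕ), p.Prime → ∀ P : Sylow p (Multiplicative B), IsCyclic P)
    (hmul : ∀ (p : ℕ), p.Prime → ∀ P : Sylow p B, IsCyclic P) :
    IsSupersoluble B := by
  have : IsZGroup B := ⟨hmul⟩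
  have : IsZGroup (Multiplicative B) := ⟨hadd⟩
  exact isSupersoluble_of_forall_exists_quotPrimeOrder exists_quotPrimeOrder_of_ne_univ

end SkewBrace
end
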